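/- Let G be a finite simple graph on n vertices. If k ≥ χ(G), then ϑ_k(G) = n. Moreover, for every k ≥ 1, ϑ_k(G) ≤ min{k·ϑ(G), n}. -/

import Mathlib

open Finset

/-- The sum of the `k` largest eigenvalues (counted with multiplicity) of a
Hermitian real matrix, realized as the supremum over all choices of
`min k n` eigenvalues of their sum. -/
noncomputable def sumKEig {V : Type*} [Fintype V] [DecidableEq V] (k : ℕ)
    (A : Matrix V V ℝ) (hA : A.IsHermitian) : ℝ :=
  sSup {x : ℝ | ∃ s : Finset V, s.card = min k (Fintype.card V) ∧
    x = ∑ i ∈ s, hA.eigenvalues i}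

/-- The generalized theta number `ϑ_k(G)`: the infimum of the sum of the `k`
largest eigenvalues over all real symmetric matrices `A` with `A i j = 1`
whenever `(i,j)` is not an edge of `G`. -/
noncomputable def gtheta {V : Type*} [Fintype V] [DecidableEq V]
    (k : ℕ) (G : SimpleGraph V) : ℝ :=
  sInf {x : ℝ | ∃ (A : Matrix V V ℝ) (hA : A.IsHermitian),
    (∀ i j, ¬ G.Adj i j → A i j = 1) ∧ x = sumKEig k A hA}

/-!
The all-ones matrix is feasible, positive semidefinite and of trace `n`, whence `ϑ_k(G) ≤ n`; and
`S_k(A) ≤ k S_1(A)` gives `ϑ_k(G) ≤ k ϑ(G)`.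

For the lower bound, let `P` be the orthogonal projection onto the functions that are constant on
the colour classes of a colouring with at most `k` colours. Its entries vanish outside the blocks of
monochromatic pairs, where every feasible `A` has entries `1`, so `tr (P A)` is the sum of the
entries of `P`, which is `n`. As `tr P ≤ k`, this is a lower bound for `S_k(A)` by a variant of
Ky Fan's maximum principle: if `0 ≤ P ≤ 1` and `tr P ≤ k`, then `min (tr (P A)) (tr A) ≤ S_k(A)`.
The minimum with `tr A` takes care of `tr P < k`, when some of the `k` largest eigenvalues of `A`
may be negative: in that case the eigenvalues left out are negative as well, and `tr A ≤ S_k(A)`.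
-/

section Threshold

variable {ι : Type*} [Fintype ι] {f w : ι → ℝ}

lemma exists_finset_card_eq_threshold (f : ι → ℝ) {m : ℕ}
    (hm : m ≤ Fintype.card ι) :
    ∃ (s : Finset ι) (μ : ℝ), #s = m ∧ (∀ i ∈ s, μ ≤ f i) ∧ ∀ i ∉ s, f i ≤ μ := by
  classical
  induction m with
  | zero =>
    obtain ⟨μ, hμ⟩ := (Set.finite_range f).bddAbove
    exact ⟨∅, μ, card_empty, by simp, fun i _ => hμ ⟨i, rfl⟩⟩
  | succ m ih =>
    obtain ⟨s, μ, hs, h_in, h_out⟩ := ih (by lia)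
    have h_compl : sᶜ.Nonempty := by rw [← card_pos, card_compl]; lia
    obtain ⟨j, hj, hj_max⟩ := sᶜ.exists_max_image f h_compl
    rw [mem_compl] at hj
    refine ⟨insert j s, f j, by rw [card_insert_of_notMem hj, hs], ?_, ?_⟩
    · exact (forall_mem_insert _ _ _).2 ⟨le_rfl, fun i hi => (h_out j hj).trans (h_in i hi)⟩
    · exact fun i hi => hj_max i (mem_compl.2 fun his => hi (mem_insert_of_mem his))

lemma sum_mul_le_of_threshold {s : Finset ι} {μ : ℝ} (h_in : ∀ i ∈ s, μ ≤ f i)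
    (h_out : ∀ i ∉ s, f i ≤ μ) (hw₀ : ∀ i, 0 ≤ w i) (hw₁ : ∀ i, w i ≤ 1) :
    ∑ i, w i * f i ≤ ∑ i ∈ s, f i + μ * (∑ i, w i - #s) := by
  classical
  have h_excess : ∑ i, w i * (f i - μ) ≤ ∑ i ∈ s, (f i - μ) := by
    rw [← sum_add_sum_compl s]
    have h_mem : ∑ i ∈ s, w i * (f i - μ) ≤ ∑ i ∈ s, (f i - μ) :=
      sum_le_sum fun i hi => mul_le_of_le_one_left (sub_nonneg.2 (h_in i hi)) (hw₁ i)
    have h_compl : ∑ i ∈ sᶜ, w i * (f i - μ) ≤ 0 :=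
      sum_nonpos fun i hi => mul_nonpos_of_nonneg_of_nonpos (hw₀ i)
        (sub_nonpos.2 (h_out i (mem_compl.1 hi)))
    linarith
  simp only [mul_sub, sum_sub_distrib, sum_const, nsmul_eq_mul, ← sum_mul] at h_excess
  linarith

lemma exists_finset_card_eq_min_le_sum {m : ℕ} (hm : m ≤ Fintype.card ι)
    (hw₀ : ∀ i, 0 ≤ w i) (hw₁ : ∀ i, w i ≤ 1) (hw : ∑ i, w i ≤ m) :
    ∃ s : Finset ι, #s = m ∧ min (∑ i, w i * f i) (∑ i, f i) ≤ ∑ i ∈ s, f i := by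
  obtain ⟨s, μ, hs, h_in, h_out⟩ := exists_finset_card_eq_threshold f hm
  refine ⟨s, hs, min_le_iff.2 ?_⟩
  rcases le_total 0 μ with hμ | hμ
  · left
    have h_slack : μ * (∑ i, w i - #s) ≤ 0 :=
      mul_nonpos_of_nonneg_of_nonpos hμ (by rw [hs]; linarith)
    linarith [sum_mul_le_of_threshold h_in h_out hw₀ hw₁]
  · right
    have h_sum_one := sum_mul_le_of_threshold (w := 1) h_in h_out (by simp) (by simp)
    have h_slack : μ * (Fintype.card ι - #s : ℝ) ≤ 0 :=
      mul_nonpos_of_nonpos_of_nonneg hμ (sub_nonneg.2 (by exact_mod_cast card_le_univ s))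
    simp only [Pi.one_apply, one_mul, sum_const, card_univ, nsmul_eq_mul, mul_one] at h_sum_one
    linarith

end Threshold

section SumKEig

variable {V : Type*} [Fintype V] [DecidableEq V] {k : ℕ} {A P : Matrix V V ℝ}

lemma sum_eigenvalues_le_sumKEig (hA : A.IsHermitian) {s : Finset V}
    (hs : #s = min k (Fintype.card V)) : ∑ i ∈ s, hA.eigenvalues i ≤ sumKEig k A hA := by
  have h_finite : (Set.range fun t : Finset V => ∑ i ∈ t, hA.eigenvalues i).Finite :=
    Set.finite_range _
  refine le_csSup (h_finite.bddAbove.mono ?_) ⟨s, hs, rfl⟩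
  rintro x ⟨t, -, rfl⟩
  exact ⟨t, rfl⟩

lemma sumKEig_le (hA : A.IsHermitian) {b : ℝ}
    (h : ∀ s : Finset V, #s = min k (Fintype.card V) → ∑ i ∈ s, hA.eigenvalues i ≤ b) :
    sumKEig k A hA ≤ b := by
  obtain ⟨s, -, hs⟩ := exists_subset_card_eq (s := (univ : Finset V))
    (n := min k (Fintype.card V)) (min_le_right _ _)
  refine csSup_le ⟨_, s, hs, rfl⟩ ?_
  rintro x ⟨t, ht, rfl⟩
  exact h t ht

lemma eigenvalues_le_sumKEig_one (hA : A.IsHermitian) (i : V) :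
    hA.eigenvalues i ≤ sumKEig 1 A hA := by
  have h_card : 0 < Fintype.card V := Fintype.card_pos_iff.2 ⟨i⟩
  simpa using sum_eigenvalues_le_sumKEig (k := 1) hA (s := {i}) (by rw [card_singleton]; lia)

lemma sumKEig_le_trace (hA : A.PosSemidef) : sumKEig k A hA.isHermitian ≤ A.trace := by
  refine sumKEig_le _ fun s _ => ?_
  rw [hA.isHermitian.trace_eq_sum_eigenvalues]
  exact sum_le_univ_sum_of_nonneg hA.eigenvalues_nonneg

lemma min_sum_mul_eigenvalues_trace_le_sumKEig (hA : A.IsHermitian) {w : V → ℝ}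
    (hw₀ : ∀ i, 0 ≤ w i) (hw₁ : ∀ i, w i ≤ 1) (hw : ∑ i, w i ≤ k) :
    min (∑ i, w i * hA.eigenvalues i) A.trace ≤ sumKEig k A hA := by
  have hw_card : ∑ i, w i ≤ Fintype.card V := by
    simpa using sum_le_sum fun i (_ : i ∈ univ) => hw₁ i
  obtain ⟨s, hs, h_le⟩ := exists_finset_card_eq_min_le_sum (f := hA.eigenvalues)
    (min_le_right k (Fintype.card V)) hw₀ hw₁ (by push_cast; exact le_min hw hw_card)
  rw [hA.trace_eq_sum_eigenvalues]
  exact h_le.trans (sum_eigenvalues_le_sumKEig hA hs)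

lemma sumKEig_nonneg (hA : A.IsHermitian) (h_trace : 0 ≤ A.trace) : 0 ≤ sumKEig k A hA := by
  simpa [h_trace] using
    min_sum_mul_eigenvalues_trace_le_sumKEig (k := k) hA (w := 0) (by simp) (by simp) (by simp)

lemma sumKEig_le_mul_sumKEig_one (hA : A.IsHermitian) (h_trace : 0 ≤ A.trace) :
    sumKEig k A hA ≤ k * sumKEig 1 A hA := by
  refine sumKEig_le hA fun s hs => ?_
  calc ∑ i ∈ s, hA.eigenvalues i ≤ #s * sumKEig 1 A hA := by
        simpa using sum_le_card_nsmul s _ _ fun i _ => eigenvalues_le_sumKEig_one hA i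
    _ ≤ k * sumKEig 1 A hA := by
        gcongr
        · exact sumKEig_nonneg hA h_trace
        · exact hs.trans_le (min_le_left _ _)

lemma trace_mul_eq_sum_mul_eigenvalues (hA : A.IsHermitian) (P : Matrix V V ℝ) :
    (P * A).trace = ∑ i, (star (hA.eigenvectorUnitary : Matrix V V ℝ) * P *
      (hA.eigenvectorUnitary : Matrix V V ℝ)) i i * hA.eigenvalues i := by
  conv_lhs => rw [hA.spectral_theorem, Unitary.conjStarAlgAut_apply, ← Matrix.mul_assoc,
    Matrix.trace_mul_comm, ← Matrix.mul_assoc, ← Matrix.mul_assoc]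
  simp [Matrix.trace, Matrix.mul_diagonal]

open scoped MatrixOrder in
-- The diagonal entries of `P` in an eigenbasis of `A` are weights in `[0, 1]`.
theorem min_trace_mul_trace_le_sumKEig (hA : A.IsHermitian) (hP₀ : 0 ≤ P) (hP₁ : P ≤ 1)
    (hP : P.trace ≤ k) : min (P * A).trace A.trace ≤ sumKEig k A hA := by
  set U := (hA.eigenvectorUnitary : Matrix V V ℝ)
  have hU_left : star U * U = 1 := Unitary.coe_star_mul_self _
  have hU_right : U * star U = 1 := Unitary.coe_mul_star_self _
  have h_nonneg : 0 ≤ star U * P * U := star_left_conjugate_nonneg hP₀ U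
  have h_le_one : star U * P * U ≤ 1 := by
    simpa [hU_left] using star_left_conjugate_le_conjugate hP₁ U
  have h_trace : (star U * P * U).trace = P.trace := by
    rw [Matrix.trace_mul_comm, ← Matrix.mul_assoc, hU_right, Matrix.one_mul]
  rw [trace_mul_eq_sum_mul_eigenvalues hA]
  refine min_sum_mul_eigenvalues_trace_le_sumKEig hA
    (fun i => (Matrix.nonneg_iff_posSemidef.1 h_nonneg).diag_nonneg) (fun i => ?_) ?_
  · simpa using (Matrix.le_iff.1 h_le_one).diag_nonneg (i := i)
  · exact h_trace.trans_le hP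

end SumKEig

section FiberAveraging

variable {V α : Type*} [Fintype V] [DecidableEq α]

/-- The matrix of the operator replacing a function on `V` by its averages over the fibres of `c`,
which is the orthogonal projection onto the functions that factor through `c`. -/
noncomputable def fiberAveraging (c : V → α) : Matrix V V ℝ :=
  Matrix.of fun x y => if c x = c y then (#{z | c z = c x} : ℝ)⁻¹ else 0

lemma fiberAveraging_apply (c : V → α) (x y : V) :
    fiberAveraging c x y = if c x = c y then (#{z | c z = c x} : ℝ)⁻¹ else 0 := rfl

lemma fiberAveraging_congr_left {c : V → α} {x y : V} (h : c x = c y) (z : V) :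
    fiberAveraging c x z = fiberAveraging c y z := by
  simp only [fiberAveraging_apply, h]

lemma sum_fiberAveraging (c : V → α) (x : V) : ∑ y, fiberAveraging c x y = 1 := by
  have h_fiber : (#{z | c z = c x} : ℝ) ≠ 0 :=
    Nat.cast_ne_zero.2 (card_ne_zero_of_mem (mem_filter.2 ⟨mem_univ x, rfl⟩))
  simp only [fiberAveraging_apply, eq_comm (a := c x), ← sum_filter, sum_const, nsmul_eq_mul]
  exact mul_inv_cancel₀ h_fiber

lemma isStarProjection_fiberAveraging (c : V → α) : IsStarProjection (fiberAveraging c) where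
  isIdempotentElem := by
    ext x z
    have h_entry (y : V) : fiberAveraging c x y * fiberAveraging c y z =
        fiberAveraging c x y * fiberAveraging c x z := by
      by_cases h : c x = c y
      · rw [fiberAveraging_congr_left h z]
      · simp [fiberAveraging_apply c x y, h]
    simp only [Matrix.mul_apply, h_entry, ← sum_mul, sum_fiberAveraging, one_mul]
  isSelfAdjoint := by
    ext x y
    by_cases h : c x = c y
    · simp [fiberAveraging_apply, h]
    · simp [fiberAveraging_apply, h, Ne.symm h]

lemma trace_fiberAveraging_le [Fintype α] (c : V → α) :
    (fiberAveraging c).trace ≤ Fintype.card α := by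
  have h_fiber (a : α) : ∑ x with c x = a, fiberAveraging c x x ≤ 1 := by
    calc ∑ x with c x = a, fiberAveraging c x x
        = ∑ x with c x = a, (#{z | c z = a} : ℝ)⁻¹ :=
          sum_congr rfl fun x hx => by simp [fiberAveraging_apply, (mem_filter.1 hx).2]
      _ = #{z | c z = a} * (#{z | c z = a} : ℝ)⁻¹ := by rw [sum_const, nsmul_eq_mul]
      _ ≤ 1 := mul_inv_le_one
  calc (fiberAveraging c).trace = ∑ a, ∑ x with c x = a, fiberAveraging c x x :=
        (sum_fiberwise univ c fun x => fiberAveraging c x x).symm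
    _ ≤ ∑ _a : α, 1 := sum_le_sum fun a _ => h_fiber a
    _ = Fintype.card α := by simp

end FiberAveraging

section Theta

variable {V : Type*} {G : SimpleGraph V} {A : Matrix V V ℝ}

/-- Membership in the class `𝒜(G)` of matrices over which `ϑ_k(G)` is the infimum. -/
structure IsThetaFeasible (G : SimpleGraph V) (A : Matrix V V ℝ) : Prop where
  isHermitian : A.IsHermitian
  apply_eq_one : ∀ i j, ¬ G.Adj i j → A i j = 1

lemma isThetaFeasible_vecMulVec_one (G : SimpleGraph V) :
    IsThetaFeasible G (Matrix.vecMulVec 1 1) where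
  isHermitian := by ext i j; simp [Matrix.vecMulVec_apply]
  apply_eq_one i j _ := by simp [Matrix.vecMulVec_apply]

variable [Fintype V]

lemma IsThetaFeasible.trace_eq_card (hA : IsThetaFeasible G A) : A.trace = Fintype.card V := by
  simp [Matrix.trace, hA.apply_eq_one _ _ G.irrefl]

lemma IsThetaFeasible.trace_nonneg (hA : IsThetaFeasible G A) : 0 ≤ A.trace :=
  hA.trace_eq_card ▸ Nat.cast_nonneg _

lemma IsThetaFeasible.trace_fiberAveraging_mul {α : Type*} [DecidableEq α]
    (hA : IsThetaFeasible G A) (C : G.Coloring α) :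
    (fiberAveraging C * A).trace = Fintype.card V := by
  have h_entry (x y : V) : fiberAveraging C x y * A y x = fiberAveraging C x y := by
    by_cases h : C x = C y
    · rw [hA.apply_eq_one y x fun hadj => C.valid hadj h.symm, mul_one]
    · simp [fiberAveraging_apply, h]
  simp [Matrix.trace, Matrix.mul_apply, h_entry, sum_fiberAveraging]

variable [DecidableEq V] {k : ℕ}

lemma gtheta_le_sumKEig (hA : IsThetaFeasible G A) : gtheta k G ≤ sumKEig k A hA.isHermitian := by
  refine csInf_le ⟨0, ?_⟩ ⟨A, hA.isHermitian, hA.apply_eq_one, rfl⟩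
  rintro x ⟨B, hB, h_one, rfl⟩
  exact sumKEig_nonneg hB (IsThetaFeasible.mk hB h_one).trace_nonneg

lemma le_gtheta {b : ℝ} (h : ∀ A (hA : IsThetaFeasible G A), b ≤ sumKEig k A hA.isHermitian) :
    b ≤ gtheta k G := by
  have h_ones := isThetaFeasible_vecMulVec_one G
  refine le_csInf ⟨_, _, h_ones.isHermitian, h_ones.apply_eq_one, rfl⟩ ?_
  rintro x ⟨A, hA, h_one, rfl⟩
  exact h A ⟨hA, h_one⟩

theorem gtheta_le_card (k : ℕ) (G : SimpleGraph V) : gtheta k G ≤ Fintype.card V := by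
  have h_ones := isThetaFeasible_vecMulVec_one G
  have h_posSemidef : (Matrix.vecMulVec 1 1 : Matrix V V ℝ).PosSemidef := by
    simpa using Matrix.posSemidef_vecMulVec_self_star (1 : V → ℝ)
  calc gtheta k G ≤ sumKEig k _ h_ones.isHermitian := gtheta_le_sumKEig h_ones
    _ ≤ (Matrix.vecMulVec 1 1 : Matrix V V ℝ).trace := sumKEig_le_trace h_posSemidef
    _ = Fintype.card V := h_ones.trace_eq_card

theorem gtheta_le_mul_gtheta_one (hk : 0 < k) (G : SimpleGraph V) :
    gtheta k G ≤ k * gtheta 1 G := by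
  have hk' : (0 : ℝ) < k := Nat.cast_pos.2 hk
  rw [← div_le_iff₀' hk']
  refine le_gtheta fun A hA => ?_
  rw [div_le_iff₀' hk']
  exact (gtheta_le_sumKEig hA).trans (sumKEig_le_mul_sumKEig_one hA.isHermitian hA.trace_nonneg)

open scoped MatrixOrder in
theorem card_le_gtheta_of_colorable (hG : G.Colorable k) : Fintype.card V ≤ gtheta k G := by
  obtain ⟨C⟩ := hG
  have hP := isStarProjection_fiberAveraging C
  have hP_trace : (fiberAveraging C).trace ≤ k := by simpa using trace_fiberAveraging_le C
  refine le_gtheta fun A hA => ?_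
  simpa [hA.trace_fiberAveraging_mul C, hA.trace_eq_card] using
    min_trace_mul_trace_le_sumKEig hA.isHermitian hP.nonneg hP.le_one hP_trace

end Theta

theorem stmt_0 {V : Type*} [Fintype V] [DecidableEq V] (G : SimpleGraph V)
    (n : ℕ) (hn : Fintype.card V = n) :
    (∀ k : ℕ, G.chromaticNumber ≤ (k : ℕ∞) → gtheta k G = (n : ℝ)) ∧
    (∀ k : ℕ, 1 ≤ k → gtheta k G ≤ min ((k : ℝ) * gtheta 1 G) (n : ℝ)) := by
  subst hn
  refine ⟨fun k hk => ?_, fun k hk => ?_⟩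
  · have hG : G.Colorable k := SimpleGraph.chromaticNumber_le_iff_colorable.1 hk
    exact (gtheta_le_card k G).antisymm (card_le_gtheta_of_colorable hG)
  · exact le_min (gtheta_le_mul_gtheta_one hk G) (gtheta_le_card k G)
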